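/- Let φ : X → ℝ be a continuous potential on X = 𝒜^(ℤ^d) such that Σ_{n≥1} n^{d−1} var_n φ < ∞. If there exist shift-invariant Borel probability measures μ, ν on X with ∫φ dμ ≠ ∫φ dν, then there exist n ≥ 1 and a pattern W : E_n → 𝒜 such that η([W]) = 0 for every maximizing measure η ∈ MM(φ). -/

import Mathlib

open MeasureTheory Filter Topology
open scoped ENNReal Classical

namespace Freezing

/-- The configuration space `X = 𝒜^(ℤ^d)`. -/
abbrev Cfg (d : ℕ) (A : Type) : Type := (Fin d → ℤ) → A

section Defs

variable {d : ℕ} {A : Type} [Fintype A] [TopologicalSpace A] [DiscreteTopology A]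
  [MeasurableSpace A] [BorelSpace A]

/-- The shift action: `(σ^n x)_m = x_{n+m}`. -/
def shift (n : Fin d → ℤ) (x : Cfg d A) : Cfg d A := fun m => x (n + m)

/-- Shift-invariance of a measure. -/
def Invariant (μ : Measure (Cfg d A)) : Prop :=
  ∀ n : Fin d → ℤ, Measure.map (shift n) μ = μ

/-- Cylinder set `[w]` for a pattern `w` on `E_n = ([0,n-1] ∩ ℤ)^d`. -/
def cylE (n : ℕ) (w : (Fin d → Fin n) → A) : Set (Cfg d A) :=
  { x | ∀ m : Fin d → Fin n, x (fun i => ((m i : ℕ) : ℤ)) = w m }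

/-- Measure-theoretic entropy `h(μ) = inf_{n ≥ 1} n^{-d} Σ_w (-μ[w] log μ[w])`. -/
noncomputable def entropy (μ : Measure (Cfg d A)) : ℝ :=
  ⨅ n : {n : ℕ // 1 ≤ n},
    ((n.1 : ℝ) ^ d)⁻¹ *
      ∑ w : (Fin d → Fin n.1) → A, Real.negMulLog (μ (cylE n.1 w)).toReal

/-- Pressure `p_φ(β) = sup { h(μ) + β ∫ φ dμ }` over shift-invariant probability measures. -/
noncomputable def pressure (φ : Cfg d A → ℝ) (β : ℝ) : ℝ :=
  sSup { r | ∃ μ : Measure (Cfg d A), IsProbabilityMeasure μ ∧ Invariant μ ∧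
    r = entropy μ + β * ∫ x, φ x ∂μ }

/-- The set of equilibrium states of `βφ`. -/
def ES (φ : Cfg d A → ℝ) (β : ℝ) : Set (Measure (Cfg d A)) :=
  { μ | IsProbabilityMeasure μ ∧ Invariant μ ∧
      entropy μ + β * ∫ x, φ x ∂μ = pressure φ β }

/-- `φ` has a freezing phase transition at `βc`. -/
def FreezingPT (φ : Cfg d A → ℝ) (βc : ℝ) : Prop :=
  (∀ β β' : ℝ, βc < β → βc < β' → ES φ β = ES φ β') ∧
  (∀ β β' : ℝ, β < βc → βc < β' → ES φ β ≠ ES φ β')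

/-- `s_φ = sup { ∫ φ dμ }` over shift-invariant probability measures. -/
noncomputable def sPhi (φ : Cfg d A → ℝ) : ℝ :=
  sSup { r | ∃ μ : Measure (Cfg d A), IsProbabilityMeasure μ ∧ Invariant μ ∧
    r = ∫ x, φ x ∂μ }

/-- The set of maximizing measures of `φ`. -/
def MM (φ : Cfg d A → ℝ) : Set (Measure (Cfg d A)) :=
  { μ | IsProbabilityMeasure μ ∧ Invariant μ ∧ (∫ x, φ x ∂μ) = sPhi φ }

/-- `h_φ = sup { h(η) : η ∈ MM(φ) }`. -/
noncomputable def hPhi (φ : Cfg d A → ℝ) : ℝ :=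
  sSup { r | ∃ μ ∈ MM φ, r = entropy μ }

/-- The zero-temperature accumulation points of `φ`. -/
def ZTA (φ : Cfg d A → ℝ) : Set (Measure (Cfg d A)) :=
  { μ | IsProbabilityMeasure μ ∧ Invariant μ ∧
      ∃ (β : ℕ → ℝ) (μs : ℕ → Measure (Cfg d A)),
        Tendsto β atTop atTop ∧ (∀ k, μs k ∈ ES φ (β k)) ∧
        ∀ f : Cfg d A → ℝ, Continuous f →
          Tendsto (fun k => ∫ x, f x ∂(μs k)) atTop (𝓝 (∫ x, f x ∂μ)) }

/-- A subshift: nonempty, closed, invariant under every shift. -/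
def IsSubshift (X₀ : Set (Cfg d A)) : Prop :=
  X₀.Nonempty ∧ IsClosed X₀ ∧ ∀ n : Fin d → ℤ, ∀ x ∈ X₀, shift n x ∈ X₀

/-- The language `L_{E_n}(X₀)`: patterns on `E_n` appearing at the origin of points of `X₀`. -/
def langE (X₀ : Set (Cfg d A)) (n : ℕ) : Set ((Fin d → Fin n) → A) :=
  { w | ∃ x ∈ X₀, ∀ m : Fin d → Fin n, x (fun i => ((m i : ℕ) : ℤ)) = w m }

/-- Topological entropy `h_top(X₀) = inf_{n ≥ 1} n^{-d} log |L_{E_n}(X₀)|`. -/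
noncomputable def topEnt (X₀ : Set (Cfg d A)) : ℝ :=
  ⨅ n : {n : ℕ // 1 ≤ n}, ((n.1 : ℝ) ^ d)⁻¹ * Real.log ((langE X₀ n.1).ncard)

/-- A measure of maximal entropy on the subshift `X₀`. -/
def IsMME (X₀ : Set (Cfg d A)) (μ : Measure (Cfg d A)) : Prop :=
  IsProbabilityMeasure μ ∧ Invariant μ ∧ μ X₀ = 1 ∧ entropy μ = topEnt X₀

/-- Ergodicity: invariant Borel sets have measure `0` or `1`. -/
def ErgodicInv (μ : Measure (Cfg d A)) : Prop :=
  ∀ s : Set (Cfg d A), MeasurableSet s → (∀ n : Fin d → ℤ, shift n ⁻¹' s = s) →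
    μ s = 0 ∨ μ s = 1

/-- The `n`-th variation `var_n φ`, over pairs agreeing on `B_n = ([-n,n] ∩ ℤ)^d`. -/
noncomputable def varPot (φ : Cfg d A → ℝ) (n : ℕ) : ℝ :=
  sSup { r | ∃ x y : Cfg d A,
    (∀ m : Fin d → ℤ, (∀ i, |m i| ≤ (n : ℤ)) → x m = y m) ∧ r = |φ x - φ y| }

/-- Sup-norm `‖m‖_∞` of a site `m ∈ ℤ^d`. -/
def supNorm (m : Fin d → ℤ) : ℕ := Finset.univ.sup fun i => (m i).natAbs

/-- The metric `dist(x,y) = 2^{-min{‖n‖_∞ : x_n ≠ y_n}}`. -/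
noncomputable def cfgDist (x y : Cfg d A) : ℝ :=
  if x = y then 0
  else (2 : ℝ) ^
    (-((sInf { k : ℕ | ∃ m : Fin d → ℤ, supNorm m = k ∧ x m ≠ y m } : ℕ) : ℤ))

/-- Distance from a point to a subshift. -/
noncomputable def distToSub (X₀ : Set (Cfg d A)) (x : Cfg d A) : ℝ :=
  sInf { r | ∃ y ∈ X₀, r = cfgDist x y }

end Defs

/-!
Assume `∫ φ dν < ∫ φ dμ`. On a large box `B_N` there are configurations `x`, `x'` whose sums of `φ`
over the translates by `B_N` are at most, respectively at least, `|B_N|` times these two integrals,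
so that `x'` beats `x` by at least `(2N+1)^d (∫ φ dμ - ∫ φ dν)`. If a configuration `y` agrees with
`x` on `B_N`, writing `x'` there instead changes the terms of the sum near the boundary of `B_N` in
an uncontrolled way, but, by summability of `n^(d-1) var_n φ`, this costs only `O((2N+1)^(d-1))`.
For `N` large the replacement is therefore a strict gain, uniformly in `y`.

Let `η` be a maximizing measure which charges the pattern `x|_{B_N}`. Tile `ℤ^d` by translates of
`B_K` and make this replacement at the centre of every tile. As long as `K` is chosen such that
`(2K+1)^d var_{K-N} φ` is small compared with the gain times the probability of the pattern, the
average over `B_K` of the translates of the resulting measure is an invariant measure with integral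
above `s_φ`, a contradiction. Such `K` exist because `Σ 1/n` diverges.
-/

section Lattice

variable {d : ℕ}

lemma natAbs_le_supNorm (m : Fin d → ℤ) (i : Fin d) : (m i).natAbs ≤ supNorm m :=
  Finset.le_sup (f := fun i => (m i).natAbs) (Finset.mem_univ i)

lemma supNorm_le_iff {m : Fin d → ℤ} {k : ℕ} : supNorm m ≤ k ↔ ∀ i, |m i| ≤ (k : ℤ) := by
  simp only [supNorm, Finset.sup_le_iff, Finset.mem_univ, true_implies, Int.abs_eq_natAbs,
    Nat.cast_le]

lemma supNorm_add_le (m n : Fin d → ℤ) : supNorm (m + n) ≤ supNorm m + supNorm n :=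
  Finset.sup_le fun i _ => (Int.natAbs_add_le _ _).trans
    (add_le_add (natAbs_le_supNorm m i) (natAbs_le_supNorm n i))

lemma supNorm_le_add_supNorm_add (m n : Fin d → ℤ) :
    supNorm n ≤ supNorm (n + m) + supNorm m := by
  simpa [supNorm] using supNorm_add_le (n + m) (-m)

/-- The box `B_n = ([-n, n] ∩ ℤ)^d`. -/
noncomputable def box (d n : ℕ) : Finset (Fin d → ℤ) :=
  Finset.Icc (fun _ => -(n : ℤ)) fun _ => (n : ℤ)

lemma mem_box {n : ℕ} {m : Fin d → ℤ} : m ∈ box d n ↔ supNorm m ≤ n := by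
  simp only [box, Finset.mem_Icc, Pi.le_def, supNorm_le_iff, abs_le, forall_and]

lemma box_subset_box {m n : ℕ} (hmn : m ≤ n) : box d m ⊆ box d n := fun _ hk =>
  mem_box.2 ((mem_box.1 hk).trans hmn)

lemma card_box (d n : ℕ) : (box d n).card = (2 * n + 1) ^ d := by
  simp only [box, Pi.card_Icc, Int.card_Icc, Finset.prod_const, Finset.card_univ, Fintype.card_fin]
  congr 1
  omega

lemma cast_card_box (d n : ℕ) : ((box d n).card : ℝ) = (2 * (n : ℝ) + 1) ^ d := by
  simp [card_box]

lemma card_filter_supNorm_eq_le (hd : 1 ≤ d) (K k : ℕ) :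
    (((box d K).filter fun n => supNorm n = k).card : ℝ)
      ≤ 2 * d * (2 * (k : ℝ) + 1) ^ (d - 1) := by
  cases k with
  | zero =>
    have hsub : ((box d K).filter fun n => supNorm n = 0) ⊆ box d 0 := fun n hn =>
      mem_box.2 (Finset.mem_filter.1 hn).2.le
    have hcard := Finset.card_le_card hsub
    rw [card_box, mul_zero, zero_add, one_pow] at hcard
    have hcard' : (((box d K).filter fun n => supNorm n = 0).card : ℝ) ≤ 1 := mod_cast hcard
    have hd' : (1 : ℝ) ≤ d := mod_cast hd
    rw [Nat.cast_zero, mul_zero, zero_add, one_pow]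
    linarith
  | succ k =>
    have hsub : ((box d K).filter fun n => supNorm n = k + 1) ⊆ box d (k + 1) \ box d k := by
      intro n hn
      rw [Finset.mem_sdiff, mem_box, mem_box, (Finset.mem_filter.1 hn).2]
      omega
    have hpow := abs_pow_sub_pow_le (2 * ((k : ℝ) + 1) + 1) (2 * (k : ℝ) + 1) d
    calc (((box d K).filter fun n => supNorm n = k + 1).card : ℝ)
        ≤ (box d (k + 1) \ box d k).card := mod_cast Finset.card_le_card hsub
      _ = (2 * ((k : ℝ) + 1) + 1) ^ d - (2 * (k : ℝ) + 1) ^ d := by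
          rw [Finset.cast_card_sdiff (box_subset_box k.le_succ), cast_card_box, cast_card_box]
          push_cast
          rfl
      _ ≤ 2 * d * (2 * ((k + 1 : ℕ) : ℝ) + 1) ^ (d - 1) := by
          refine (le_abs_self _).trans (hpow.trans (le_of_eq ?_))
          have hdiff : 2 * ((k : ℝ) + 1) + 1 - (2 * (k : ℝ) + 1) = 2 := by ring
          rw [hdiff, abs_two, abs_of_nonneg (by positivity : 0 ≤ 2 * ((k : ℝ) + 1) + 1),
            abs_of_nonneg (by positivity : 0 ≤ 2 * (k : ℝ) + 1), max_eq_left (by linarith)]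
          push_cast
          rfl

lemma sum_box_comp_supNorm_le (hd : 1 ≤ d) (K : ℕ) {g : ℕ → ℝ} (hg : ∀ k, 0 ≤ g k) :
    ∑ n ∈ box d K, g (supNorm n)
      ≤ ∑ k ∈ Finset.range (K + 1), 2 * d * (2 * (k : ℝ) + 1) ^ (d - 1) * g k := by
  rw [← Finset.sum_fiberwise_of_maps_to (t := Finset.range (K + 1)) (g := supNorm)
    fun n hn => Finset.mem_range_succ_iff.2 (mem_box.1 hn)]
  refine Finset.sum_le_sum fun k _ => ?_
  rw [Finset.sum_congr rfl fun n hn => congrArg g (Finset.mem_filter.1 hn).2,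
    Finset.sum_const, nsmul_eq_mul]
  exact mul_le_mul_of_nonneg_right (card_filter_supNorm_eq_le hd K k) (hg k)

/-- The distance, in sup-norm, from a site of norm `k` to the boundary of the box `B_N`: sites at
most this far away lie in `B_N` if and only if the given one does. At most one of the two truncated
subtractions is nonzero. -/
def boundaryDist (N k : ℕ) : ℕ := (N - k) + (k - (N + 1))

lemma add_mem_box_iff {N : ℕ} {m n : Fin d → ℤ} (hm : supNorm m ≤ boundaryDist N (supNorm n)) :
    n + m ∈ box d N ↔ n ∈ box d N := by
  have h₁ := supNorm_add_le n m
  have h₂ := supNorm_le_add_supNorm_add m n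
  simp only [mem_box]
  unfold boundaryDist at hm
  omega

lemma sum_range_comp_boundaryDist_le {a : ℕ → ℝ} (ha : ∀ j, 0 ≤ a j) (hs : Summable a) (N K : ℕ) :
    ∑ k ∈ Finset.range K, a (boundaryDist N k) ≤ 2 * ∑' j, a j := by
  have hinside : ∑ k ∈ Finset.range (N + 1), a (boundaryDist N k)
      = ∑ j ∈ Finset.range (N + 1), a j := by
    rw [← Finset.sum_range_reflect a]
    refine Finset.sum_congr rfl fun k hk => congrArg a ?_
    have := Finset.mem_range.1 hk
    unfold boundaryDist
    omega
  have houtside : ∑ j ∈ Finset.range K, a (boundaryDist N (N + 1 + j))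
      = ∑ j ∈ Finset.range K, a j := by
    refine Finset.sum_congr rfl fun j _ => congrArg a ?_
    unfold boundaryDist
    omega
  calc ∑ k ∈ Finset.range K, a (boundaryDist N k)
      ≤ ∑ k ∈ Finset.range (N + 1 + K), a (boundaryDist N k) :=
        Finset.sum_le_sum_of_subset_of_nonneg
          (Finset.range_subset_range.2 (Nat.le_add_left _ _)) fun k _ _ => ha _
    _ = ∑ j ∈ Finset.range (N + 1), a j + ∑ j ∈ Finset.range K, a j := by
        rw [Finset.sum_range_add, hinside, houtside]
    _ ≤ ∑' j, a j + ∑' j, a j :=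
        add_le_add (hs.sum_le_tsum _ fun j _ => ha j) (hs.sum_le_tsum _ fun j _ => ha j)
    _ = 2 * ∑' j, a j := (two_mul _).symm

lemma two_mul_add_one_le_boundaryDist (N k : ℕ) :
    2 * (k : ℝ) + 1 ≤ 3 * (2 * (N : ℝ) + 1) * ((boundaryDist N k : ℝ) + 1) := by
  have hk : k ≤ N + 1 + boundaryDist N k := by
    unfold boundaryDist
    omega
  have hk' : (k : ℝ) ≤ N + 1 + boundaryDist N k := mod_cast hk
  have hprod : (0 : ℝ) ≤ N * boundaryDist N k := by positivity
  linarith [(N.cast_nonneg : (0 : ℝ) ≤ N), (Nat.cast_nonneg _ : (0 : ℝ) ≤ boundaryDist N k)]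

lemma exists_sum_box_boundaryDist_le (hd : 1 ≤ d) {v : ℕ → ℝ} (hv : ∀ k, 0 ≤ v k)
    (hs : Summable fun j : ℕ => ((j : ℝ) + 1) ^ (d - 1) * v j) :
    ∃ C : ℝ, ∀ N K : ℕ,
      ∑ n ∈ box d K, v (boundaryDist N (supNorm n)) ≤ C * (2 * (N : ℝ) + 1) ^ (d - 1) := by
  set a : ℕ → ℝ := fun j => ((j : ℝ) + 1) ^ (d - 1) * v j
  have ha : ∀ j, 0 ≤ a j := fun j => mul_nonneg (by positivity) (hv j)
  refine ⟨2 * d * 3 ^ (d - 1) * (2 * ∑' j, a j), fun N K => ?_⟩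
  calc ∑ n ∈ box d K, v (boundaryDist N (supNorm n))
      ≤ ∑ k ∈ Finset.range (K + 1), 2 * d * (2 * (k : ℝ) + 1) ^ (d - 1) * v (boundaryDist N k) :=
        sum_box_comp_supNorm_le hd K (g := fun k => v (boundaryDist N k)) fun k => hv _
    _ ≤ ∑ k ∈ Finset.range (K + 1),
          2 * d * (3 * (2 * (N : ℝ) + 1)) ^ (d - 1) * a (boundaryDist N k) := by
        refine Finset.sum_le_sum fun k _ => ?_
        rw [← mul_assoc, mul_assoc (2 * (d : ℝ)) (_ ^ (d - 1)) (_ ^ (d - 1)), ← mul_pow]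
        have := hv (boundaryDist N k)
        have := two_mul_add_one_le_boundaryDist N k
        gcongr
    _ ≤ 2 * d * (3 * (2 * (N : ℝ) + 1)) ^ (d - 1) * (2 * ∑' j, a j) := by
        rw [← Finset.mul_sum]
        have := sum_range_comp_boundaryDist_le ha hs N (K + 1)
        gcongr
    _ = 2 * d * 3 ^ (d - 1) * (2 * ∑' j, a j) * (2 * (N : ℝ) + 1) ^ (d - 1) := by
        rw [mul_pow]
        ring

lemma exists_pow_mul_lt_of_summable (hd : 1 ≤ d) {v : ℕ → ℝ} (hv : ∀ k, 0 ≤ v k)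
    (hs : Summable fun j : ℕ => ((j : ℝ) + 1) ^ (d - 1) * v j) (N : ℕ) {ε : ℝ} (hε : 0 < ε) :
    ∃ j : ℕ, (2 * ((N + j : ℕ) : ℝ) + 1) ^ d * v j < ε := by
  by_contra! hlarge
  set c : ℝ := (2 * (N : ℝ) + 2) ^ d
  have hharmonic : ∀ j : ℕ, 1 / ((j + 1 : ℕ) : ℝ) ≤ c / ε * (((j : ℝ) + 1) ^ (d - 1) * v j) := by
    intro j
    have hbase : 2 * ((N + j : ℕ) : ℝ) + 1 ≤ (2 * (N : ℝ) + 2) * ((j : ℝ) + 1) := by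
      push_cast
      have : (0 : ℝ) ≤ N * j := by positivity
      linarith
    have hε_le : ε ≤ c * (((j : ℝ) + 1) ^ (d - 1) * v j) * (j + 1) := calc
      ε ≤ (2 * ((N + j : ℕ) : ℝ) + 1) ^ d * v j := hlarge j
      _ ≤ ((2 * (N : ℝ) + 2) * ((j : ℝ) + 1)) ^ d * v j := by
        have := hv j
        gcongr
      _ = c * (((j : ℝ) + 1) ^ (d - 1) * v j) * (j + 1) := by
        rw [mul_pow, ← pow_sub_one_mul (by omega : d ≠ 0) ((j : ℝ) + 1)]
        ring
    rw [div_le_iff₀ (by positivity), div_mul_eq_mul_div, div_mul_eq_mul_div, le_div_iff₀ hε,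
      one_mul]
    exact_mod_cast hε_le
  refine Real.not_summable_one_div_natCast ((summable_nat_add_iff 1).1 ?_)
  exact Summable.of_nonneg_of_le (fun j => by positivity) hharmonic (hs.mul_left _)

lemma summable_pow_mul_of_summable_succ (d : ℕ) {v : ℕ → ℝ} (hv : ∀ k, 0 ≤ v k)
    (hs : Summable fun n : ℕ => ((n + 1 : ℕ) : ℝ) ^ (d - 1) * v (n + 1)) :
    Summable fun j : ℕ => ((j : ℝ) + 1) ^ (d - 1) * v j := by
  refine (summable_nat_add_iff 1).1 (Summable.of_nonneg_of_le
    (fun j => mul_nonneg (by positivity) (hv _)) (fun j => ?_) (hs.mul_left ((2 : ℝ) ^ (d - 1))))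
  rw [← mul_assoc, ← mul_pow]
  have := hv (j + 1)
  gcongr
  push_cast
  linarith [(j.cast_nonneg : (0 : ℝ) ≤ j)]

lemma exists_mul_pow_pred_lt_pow_mul (hd : 1 ≤ d) (C : ℝ) {γ : ℝ} (hγ : 0 < γ) :
    ∃ N : ℕ, C * (2 * (N : ℝ) + 1) ^ (d - 1) < (2 * (N : ℝ) + 1) ^ d * γ := by
  obtain ⟨N, hN⟩ := exists_nat_gt (C / γ)
  refine ⟨N, ?_⟩
  have hCN : C < (2 * (N : ℝ) + 1) * γ :=
    (div_lt_iff₀ hγ).1 (hN.trans_le (by linarith [(N.cast_nonneg : (0 : ℝ) ≤ N)]))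
  calc C * (2 * (N : ℝ) + 1) ^ (d - 1)
      < (2 * (N : ℝ) + 1) * γ * (2 * (N : ℝ) + 1) ^ (d - 1) := by gcongr
    _ = (2 * (N : ℝ) + 1) ^ d * γ := by
        rw [← pow_sub_one_mul (by omega : d ≠ 0) (2 * (N : ℝ) + 1)]
        ring

end Lattice

section CenteredResidue

variable {d : ℕ}

/-- The representative in `B_K` of a site modulo `(2K+1)ℤ^d`. The translates of `B_K` by
`(2K+1)ℤ^d` tile the lattice, and this is the position of a site relative to the centre of its
tile. -/
def centeredResidue (K : ℕ) (m : Fin d → ℤ) : Fin d → ℤ :=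
  fun i => (m i : ZMod (2 * K + 1)).valMinAbs

lemma supNorm_valMinAbs_le {K : ℕ} (z : Fin d → ZMod (2 * K + 1)) :
    supNorm (fun i => (z i).valMinAbs) ≤ K :=
  Finset.sup_le fun i _ => (ZMod.natAbs_valMinAbs_le (z i)).trans (by omega)

lemma centeredResidue_add_smul (K : ℕ) (m q : Fin d → ℤ) :
    centeredResidue K (m + (2 * K + 1) • q) = centeredResidue K m := by
  funext i
  have hperiod : (2 * (K : ZMod (2 * K + 1)) + 1) = 0 := mod_cast ZMod.natCast_self (2 * K + 1)
  simp [centeredResidue, hperiod]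

lemma dvd_sub_centeredResidue (K : ℕ) (m : Fin d → ℤ) (i : Fin d) :
    ((2 * K + 1 : ℕ) : ℤ) ∣ m i - centeredResidue K m i :=
  (ZMod.intCast_eq_intCast_iff_dvd_sub _ _ _).1 (ZMod.coe_valMinAbs _)

lemma exists_eq_centeredResidue_add_smul (K : ℕ) (m : Fin d → ℤ) :
    ∃ q : Fin d → ℤ, m = centeredResidue K m + (2 * K + 1) • q := by
  choose q hq using dvd_sub_centeredResidue K m
  refine ⟨q, funext fun i => ?_⟩
  rw [Pi.add_apply, Pi.smul_apply, nsmul_eq_mul, ← hq, add_sub_cancel]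

lemma centeredResidue_eq_self {K : ℕ} {m : Fin d → ℤ}
    (h : supNorm m + supNorm (centeredResidue K m) ≤ 2 * K) : centeredResidue K m = m := by
  funext i
  refine (sub_eq_zero.1 (Int.eq_zero_of_abs_lt_dvd (dvd_sub_centeredResidue K m i) ?_)).symm
  have h₁ := natAbs_le_supNorm m i
  have h₂ := natAbs_le_supNorm (centeredResidue K m) i
  rw [abs_lt]
  omega

lemma centeredResidue_of_supNorm_le {K : ℕ} {m : Fin d → ℤ} (hm : supNorm m ≤ K) :
    centeredResidue K m = m := by
  have hres : supNorm (centeredResidue K m) ≤ K := supNorm_valMinAbs_le _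
  exact centeredResidue_eq_self (by omega)

variable {M : Type*} [AddCommMonoid M]

lemma sum_box_eq_sum_zmod (K : ℕ) (f : (Fin d → ℤ) → M) :
    ∑ n ∈ box d K, f n = ∑ z : Fin d → ZMod (2 * K + 1), f fun i => (z i).valMinAbs :=
  Finset.sum_nbij' (fun n i => (n i : ZMod (2 * K + 1))) (fun z i => (z i).valMinAbs)
    (fun _ _ => Finset.mem_univ _) (fun z _ => mem_box.2 (supNorm_valMinAbs_le z))
    (fun _ hn => centeredResidue_of_supNorm_le (mem_box.1 hn))
    (fun _ _ => funext fun _ => ZMod.coe_valMinAbs _)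
    (fun _ hn => congrArg f (centeredResidue_of_supNorm_le (mem_box.1 hn)).symm)

lemma sum_box_add_of_periodic (K : ℕ) {f : (Fin d → ℤ) → M}
    (hf : ∀ m q, f (m + (2 * K + 1) • q) = f m) (a : Fin d → ℤ) :
    ∑ n ∈ box d K, f (n + a) = ∑ n ∈ box d K, f n := by
  have hres : ∀ m, f (centeredResidue K m) = f m := fun m => by
    obtain ⟨q, hq⟩ := exists_eq_centeredResidue_add_smul K m
    conv_rhs => rw [hq, hf]
  calc ∑ n ∈ box d K, f (n + a)
      = ∑ z : Fin d → ZMod (2 * K + 1), f fun i => (z i + (a i : ZMod (2 * K + 1))).valMinAbs := by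
        rw [sum_box_eq_sum_zmod K fun n => f (n + a)]
        refine Finset.sum_congr rfl fun z _ => ?_
        exact (hres _).symm.trans (congrArg f (funext fun i => by simp [centeredResidue]))
    _ = ∑ z : Fin d → ZMod (2 * K + 1), f fun i => (z i).valMinAbs :=
        Equiv.sum_comp (Equiv.addRight fun i => (a i : ZMod (2 * K + 1)))
          fun z => f fun i => (z i).valMinAbs
    _ = ∑ n ∈ box d K, f n := (sum_box_eq_sum_zmod K f).symm

end CenteredResidue

section Potential

variable {d : ℕ} {A : Type} {φ : Cfg d A → ℝ} {M : ℝ}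

lemma varPot_nonneg (φ : Cfg d A → ℝ) (n : ℕ) : 0 ≤ varPot φ n :=
  Real.sSup_nonneg fun _ ⟨_, _, _, hr⟩ => hr ▸ abs_nonneg _

lemma abs_sub_le_varPot (hM : ∀ x, |φ x| ≤ M) {n : ℕ} {x y : Cfg d A}
    (hxy : ∀ m, supNorm m ≤ n → x m = y m) : |φ x - φ y| ≤ varPot φ n := by
  refine le_csSup ⟨M + M, ?_⟩ ⟨x, y, fun m hm => hxy m (supNorm_le_iff.2 hm), rfl⟩
  rintro r ⟨x, y, -, rfl⟩
  exact (abs_sub _ _).trans (add_le_add (hM x) (hM y))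

lemma shift_shift (m n : Fin d → ℤ) (x : Cfg d A) : shift m (shift n x) = shift (n + m) x :=
  funext fun k => congrArg x (add_assoc n m k).symm

/-- The sum of `φ` over the translates of a configuration by the sites of `B_N`. -/
noncomputable def boxSum (φ : Cfg d A → ℝ) (N : ℕ) (x : Cfg d A) : ℝ :=
  ∑ n ∈ box d N, φ (shift n x)

/-- The configurations which agree with `x` on the box `B_N`. -/
def boxCylinder (N : ℕ) (x : Cfg d A) : Set (Cfg d A) :=
  {y | ∀ k ∈ box d N, y k = x k}

/-- The pattern of `x` on `B_N`, reindexed by its translate `E_{2N+1}`. -/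
def boxPattern (N : ℕ) (x : Cfg d A) : (Fin d → Fin (2 * N + 1)) → A :=
  fun m => shift (fun _ => -(N : ℤ)) x fun i => ((m i : ℕ) : ℤ)

lemma preimage_shift_cylE_boxPattern (N : ℕ) (x : Cfg d A) :
    shift (fun _ => -(N : ℤ)) ⁻¹' cylE (2 * N + 1) (boxPattern N x) = boxCylinder N x := by
  ext y
  constructor
  · intro hy k hk
    have hk' : ∀ i, -(N : ℤ) ≤ k i ∧ k i ≤ N := fun i =>
      abs_le.1 (supNorm_le_iff.1 (mem_box.1 hk) i)
    have hcentre : ((fun _ => -(N : ℤ)) + fun i => (((k i + N).toNat : ℕ) : ℤ)) = k := by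
      funext i
      have := hk' i
      rw [Pi.add_apply]
      omega
    have hagree := hy fun i => ⟨(k i + N).toNat, by have := hk' i; omega⟩
    simpa only [shift, boxPattern, hcentre] using hagree
  · intro hy m
    refine hy _ (mem_box.2 (supNorm_le_iff.2 fun i => ?_))
    have := (m i).isLt
    rw [Pi.add_apply, abs_le]
    omega

/-- The configuration obtained from `y` by looking at the central copy of `B_N` in each tile of side
`2K+1` and overwriting it by `x'` wherever it displays the pattern of `x`. -/
noncomputable def replaceBlocks (N K : ℕ) (x x' y : Cfg d A) : Cfg d A := fun m =>
  if centeredResidue K m ∈ box d N ∧ shift (m - centeredResidue K m) y ∈ boxCylinder N x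
  then x' (centeredResidue K m) else y m

lemma replaceBlocks_shift (N K : ℕ) (x x' y : Cfg d A) (q : Fin d → ℤ) :
    replaceBlocks N K x x' (shift ((2 * K + 1) • q) y)
      = shift ((2 * K + 1) • q) (replaceBlocks N K x x' y) := by
  funext m
  have hres : centeredResidue K ((2 * K + 1) • q + m) = centeredResidue K m := by
    rw [add_comm, centeredResidue_add_smul]
  change replaceBlocks N K x x' (shift ((2 * K + 1) • q) y) m
    = replaceBlocks N K x x' y ((2 * K + 1) • q + m)
  simp only [replaceBlocks, shift_shift, hres, add_sub_assoc]
  rfl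

lemma replaceBlocks_apply {N K : ℕ} (hNK : N ≤ K) (x x' y : Cfg d A) {m : Fin d → ℤ}
    (hm : supNorm m + N ≤ 2 * K) :
    replaceBlocks N K x x' y m
      = if m ∈ box d N ∧ y ∈ boxCylinder N x then x' m else y m := by
  by_cases hself : centeredResidue K m = m
  · have hshift : shift 0 y = y := funext fun k => congrArg y (zero_add k)
    simp only [replaceBlocks, hself, sub_self, hshift]
  · have hres : centeredResidue K m ∉ box d N := fun h =>
      hself (centeredResidue_eq_self (by have := mem_box.1 h; omega))
    have hm' : m ∉ box d N := fun h =>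
      hself (centeredResidue_of_supNorm_le ((mem_box.1 h).trans hNK))
    simp only [replaceBlocks, hres, hm', false_and, if_false]

lemma sub_sub_le_sub_replaceBlocks (hM : ∀ x, |φ x| ≤ M) {N K : ℕ} (hNK : N ≤ K)
    {x x' y : Cfg d A} (hy : y ∈ boxCylinder N x) {n : Fin d → ℤ} (hn : n ∈ box d K) :
    (if n ∈ box d N then φ (shift n x') - φ (shift n x) else 0)
        - 2 * varPot φ (boundaryDist N (supNorm n))
      ≤ φ (shift n (replaceBlocks N K x x' y)) - φ (shift n y) := by
  have hrepl : ∀ m, supNorm m ≤ boundaryDist N (supNorm n) →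
      replaceBlocks N K x x' y (n + m) = if n ∈ box d N then x' (n + m) else y (n + m) := by
    intro m hm
    have hfar : supNorm (n + m) + N ≤ 2 * K := by
      have := supNorm_add_le n m
      have := mem_box.1 hn
      have := add_mem_box_iff hm
      simp only [mem_box] at this
      unfold boundaryDist at hm
      omega
    simp only [replaceBlocks_apply hNK x x' y hfar, hy, and_true, add_mem_box_iff hm]
  split_ifs with hnN
  · have hnew : |φ (shift n (replaceBlocks N K x x' y)) - φ (shift n x')|
        ≤ varPot φ (boundaryDist N (supNorm n)) :=
      abs_sub_le_varPot hM fun m hm => (hrepl m hm).trans (if_pos hnN)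
    have hold : |φ (shift n y) - φ (shift n x)| ≤ varPot φ (boundaryDist N (supNorm n)) :=
      abs_sub_le_varPot hM fun m hm => hy _ ((add_mem_box_iff hm).2 hnN)
    linarith [(abs_le.1 hnew).1, (abs_le.1 hold).2]
  · have hsame : |φ (shift n (replaceBlocks N K x x' y)) - φ (shift n y)|
        ≤ varPot φ (boundaryDist N (supNorm n)) :=
      abs_sub_le_varPot hM fun m hm => (hrepl m hm).trans (if_neg hnN)
    linarith [(abs_le.1 hsame).1, varPot_nonneg φ (boundaryDist N (supNorm n))]

lemma boxSum_replaceBlocks_of_mem (hM : ∀ x, |φ x| ≤ M) {N K : ℕ} (hNK : N ≤ K)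
    {x x' y : Cfg d A} (hy : y ∈ boxCylinder N x) :
    boxSum φ N x' - boxSum φ N x - 2 * ∑ n ∈ box d K, varPot φ (boundaryDist N (supNorm n))
      ≤ boxSum φ K (replaceBlocks N K x x' y) - boxSum φ K y := by
  have hgain : ∑ n ∈ box d K, (if n ∈ box d N then φ (shift n x') - φ (shift n x) else 0)
      = boxSum φ N x' - boxSum φ N x := by
    rw [Finset.sum_ite_mem, Finset.inter_eq_right.2 (box_subset_box hNK), Finset.sum_sub_distrib]
    rfl
  rw [← hgain, boxSum, boxSum, Finset.mul_sum, ← Finset.sum_sub_distrib, ← Finset.sum_sub_distrib]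
  exact Finset.sum_le_sum fun n hn => sub_sub_le_sub_replaceBlocks hM hNK hy hn

lemma boxSum_replaceBlocks_of_notMem (hM : ∀ x, |φ x| ≤ M) {N K : ℕ} (hNK : N ≤ K)
    {x y : Cfg d A} (x' : Cfg d A) (hy : y ∉ boxCylinder N x) :
    -((2 * (K : ℝ) + 1) ^ d * varPot φ (K - N))
      ≤ boxSum φ K (replaceBlocks N K x x' y) - boxSum φ K y := by
  rw [← cast_card_box, ← nsmul_eq_mul, ← Finset.sum_const, ← Finset.sum_neg_distrib, boxSum, boxSum,
    ← Finset.sum_sub_distrib]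
  refine Finset.sum_le_sum fun n hn => (abs_le.1 (abs_sub_le_varPot hM fun m hm => ?_)).1
  have hfar : supNorm (n + m) + N ≤ 2 * K := by
    have := supNorm_add_le n m
    have := mem_box.1 hn
    omega
  exact (replaceBlocks_apply hNK x x' y hfar).trans (if_neg fun h => hy h.2)

end Potential

section InvariantMeasures

variable {d : ℕ} {A : Type} [MeasurableSpace A] {φ : Cfg d A → ℝ} {M : ℝ}

lemma measurable_shift (n : Fin d → ℤ) : Measurable (shift n : Cfg d A → Cfg d A) :=
  measurable_pi_lambda _ fun _ => measurable_pi_apply _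

lemma Invariant.measurePreserving {η : Measure (Cfg d A)} (hη : Invariant η) (n : Fin d → ℤ) :
    MeasurePreserving (shift n) η η :=
  ⟨measurable_shift n, hη n⟩

lemma integrable_of_abs_le {η : Measure (Cfg d A)} [IsFiniteMeasure η] (hφ : Measurable φ)
    (hM : ∀ x, |φ x| ≤ M) : Integrable φ η :=
  Integrable.of_bound hφ.aestronglyMeasurable M (Eventually.of_forall hM)

lemma integral_le_sPhi (hM : ∀ x, |φ x| ≤ M) {η : Measure (Cfg d A)} [hη : IsProbabilityMeasure η]
    (hinv : Invariant η) : ∫ x, φ x ∂η ≤ sPhi φ := by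
  refine le_csSup ⟨M, ?_⟩ ⟨η, hη, hinv, rfl⟩
  rintro r ⟨ρ, hρ, -, rfl⟩
  have hbound := norm_integral_le_of_norm_le_const (μ := ρ) (f := φ) (C := M)
    (Eventually.of_forall hM)
  rw [probReal_univ, mul_one] at hbound
  exact (le_abs_self _).trans hbound

lemma integrable_comp_shift {η : Measure (Cfg d A)} [IsFiniteMeasure η] (hφ : Measurable φ)
    (hM : ∀ x, |φ x| ≤ M) (n : Fin d → ℤ) : Integrable (fun x => φ (shift n x)) η :=
  integrable_of_abs_le (hφ.comp (measurable_shift n)) fun _ => hM _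

lemma integrable_boxSum {η : Measure (Cfg d A)} [IsFiniteMeasure η] (hφ : Measurable φ)
    (hM : ∀ x, |φ x| ≤ M) (N : ℕ) : Integrable (boxSum φ N) η :=
  integrable_finsetSum _ fun n _ => integrable_comp_shift hφ hM n

lemma integral_boxSum {η : Measure (Cfg d A)} [IsFiniteMeasure η] (hinv : Invariant η)
    (hφ : Measurable φ) (hM : ∀ x, |φ x| ≤ M) (N : ℕ) :
    ∫ x, boxSum φ N x ∂η = (2 * (N : ℝ) + 1) ^ d * ∫ x, φ x ∂η := by
  have hshift : ∀ n, ∫ x, φ (shift n x) ∂η = ∫ x, φ x ∂η := fun n => by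
    conv_rhs => rw [← hinv n]
    exact (integral_map (measurable_shift n).aemeasurable hφ.aestronglyMeasurable).symm
  simp only [boxSum]
  rw [integral_finsetSum _ fun n _ => integrable_comp_shift hφ hM n]
  simp only [hshift, Finset.sum_const, nsmul_eq_mul, cast_card_box]

/-- The average of the translates of `ρ` by the sites of `B_K`. -/
noncomputable def boxAverage (K : ℕ) (ρ : Measure (Cfg d A)) : Measure (Cfg d A) :=
  ((box d K).card : ℝ≥0∞)⁻¹ • ∑ n ∈ box d K, ρ.map (shift n)

instance isProbabilityMeasure_boxAverage (K : ℕ) (ρ : Measure (Cfg d A)) [IsProbabilityMeasure ρ] :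
    IsProbabilityMeasure (boxAverage K ρ) where
  measure_univ := by
    have hmass : ∀ n, ρ.map (shift n) Set.univ = 1 := fun n => by
      rw [Measure.map_apply (measurable_shift n) .univ, Set.preimage_univ, measure_univ]
    have hcard : ((box d K).card : ℝ≥0∞) ≠ 0 := by simp [card_box]
    rw [boxAverage, Measure.smul_apply, Measure.finsetSum_apply]
    simp only [hmass, Finset.sum_const, nsmul_eq_mul, mul_one, smul_eq_mul]
    exact ENNReal.inv_mul_cancel hcard (ENNReal.natCast_ne_top _)

lemma invariant_boxAverage {K : ℕ} {ρ : Measure (Cfg d A)}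
    (hρ : ∀ q, ρ.map (shift ((2 * K + 1) • q)) = ρ) : Invariant (boxAverage K ρ) := by
  have hmap : ∀ (τ : Measure (Cfg d A)) (m n : Fin d → ℤ),
      (τ.map (shift n)).map (shift m) = τ.map (shift (n + m)) := fun τ m n => by
    rw [Measure.map_map (measurable_shift m) (measurable_shift n)]
    exact congrArg (τ.map ·) (funext (shift_shift m n))
  intro a
  have hperiodic : ∀ m q, ρ.map (shift (m + (2 * K + 1) • q)) = ρ.map (shift m) := fun m q => by
    rw [add_comm, ← hmap, hρ]
  rw [boxAverage, Measure.map_smul, Measure.map_finset_sum (measurable_shift a).aemeasurable]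
  simp only [hmap, sum_box_add_of_periodic K (f := fun n => ρ.map (shift n)) hperiodic a]

lemma integral_boxAverage (hφ : Measurable φ) (hM : ∀ x, |φ x| ≤ M) (K : ℕ)
    (ρ : Measure (Cfg d A)) [IsProbabilityMeasure ρ] :
    ∫ x, φ x ∂boxAverage K ρ = ((2 * (K : ℝ) + 1) ^ d)⁻¹ * ∫ x, boxSum φ K x ∂ρ := by
  simp only [boxSum]
  rw [boxAverage, integral_smul_measure, smul_eq_mul, ENNReal.toReal_inv, ENNReal.toReal_natCast,
    cast_card_box, integral_finsetSum_measure fun n _ => integrable_of_abs_le hφ hM,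
    integral_finsetSum _ fun n _ => integrable_comp_shift hφ hM n]
  exact congrArg _ (Finset.sum_congr rfl fun n _ =>
    integral_map (measurable_shift n).aemeasurable hφ.aestronglyMeasurable)

lemma integral_boxSum_le (hφ : Measurable φ) (hM : ∀ x, |φ x| ≤ M) {K : ℕ}
    {ρ : Measure (Cfg d A)} [IsProbabilityMeasure ρ]
    (hρ : ∀ q, ρ.map (shift ((2 * K + 1) • q)) = ρ) :
    ∫ x, boxSum φ K x ∂ρ ≤ (2 * (K : ℝ) + 1) ^ d * sPhi φ := by
  have hle := integral_le_sPhi hM (invariant_boxAverage hρ)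
  rwa [integral_boxAverage hφ hM, inv_mul_le_iff₀ (by positivity)] at hle

lemma exists_mul_sub_le_boxSum_sub (hφ : Measurable φ) (hM : ∀ x, |φ x| ≤ M)
    {μ ν : Measure (Cfg d A)} [IsProbabilityMeasure μ] [IsProbabilityMeasure ν]
    (hμ : Invariant μ) (hν : Invariant ν) (N : ℕ) :
    ∃ x x' : Cfg d A, (2 * (N : ℝ) + 1) ^ d * (∫ y, φ y ∂μ - ∫ y, φ y ∂ν)
      ≤ boxSum φ N x' - boxSum φ N x := by
  obtain ⟨x, hx⟩ := exists_le_integral (integrable_boxSum (η := ν) hφ hM N)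
  obtain ⟨x', hx'⟩ := exists_integral_le (integrable_boxSum (η := μ) hφ hM N)
  rw [integral_boxSum hν hφ hM] at hx
  rw [integral_boxSum hμ hφ hM] at hx'
  exact ⟨x, x', by linarith⟩

section Cylinders

variable [MeasurableSingletonClass A]

lemma measurableSet_boxCylinder (N : ℕ) (x : Cfg d A) : MeasurableSet (boxCylinder N x) := by
  have hinter : boxCylinder N x = ⋂ k ∈ box d N, (fun y : Cfg d A => y k) ⁻¹' {x k} := by
    ext y
    simp [boxCylinder]
  rw [hinter]
  exact Finset.measurableSet_biInter _ fun k _ => measurable_pi_apply _ (measurableSet_singleton _)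

lemma measurableSet_cylE (n : ℕ) (w : (Fin d → Fin n) → A) : MeasurableSet (cylE n w) := by
  have hinter : cylE n w = ⋂ m, (fun y : Cfg d A => y fun i => ((m i : ℕ) : ℤ)) ⁻¹' {w m} := by
    ext y
    simp [cylE]
  rw [hinter]
  exact MeasurableSet.iInter fun m => measurable_pi_apply _ (measurableSet_singleton _)

lemma Invariant.measure_cylE_boxPattern {η : Measure (Cfg d A)} (hη : Invariant η) (N : ℕ)
    (x : Cfg d A) : η (cylE (2 * N + 1) (boxPattern N x)) = η (boxCylinder N x) := by
  rw [← preimage_shift_cylE_boxPattern,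
    (hη.measurePreserving _).measure_preimage (measurableSet_cylE _ _).nullMeasurableSet]

lemma measurable_replaceBlocks (N K : ℕ) (x x' : Cfg d A) :
    Measurable (replaceBlocks N K x x') := by
  refine measurable_pi_lambda _ fun m => Measurable.ite ?_ measurable_const (measurable_pi_apply m)
  exact (MeasurableSet.const _).inter (measurable_shift _ (measurableSet_boxCylinder N x))

lemma integral_boxSum_replaceBlocks_le (hφ : Measurable φ) (hM : ∀ x, |φ x| ≤ M)
    {η : Measure (Cfg d A)} [IsProbabilityMeasure η] (hinv : Invariant η) (N K : ℕ)
    (x x' : Cfg d A) :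
    ∫ y, boxSum φ K (replaceBlocks N K x x' y) ∂η ≤ (2 * (K : ℝ) + 1) ^ d * sPhi φ := by
  have hR := measurable_replaceBlocks N K x x'
  have := Measure.isProbabilityMeasure_map (μ := η) hR.aemeasurable
  rw [← integral_map hR.aemeasurable (integrable_boxSum hφ hM K).aestronglyMeasurable]
  refine integral_boxSum_le hφ hM fun q => ?_
  have hcomm : shift ((2 * K + 1) • q) ∘ replaceBlocks N K x x'
      = replaceBlocks N K x x' ∘ shift ((2 * K + 1) • q) :=
    funext fun y => (replaceBlocks_shift N K x x' y q).symm
  rw [Measure.map_map (measurable_shift _) hR, hcomm, ← Measure.map_map hR (measurable_shift _),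
    hinv]

lemma measureReal_boxCylinder_mul_le (hφ : Measurable φ) (hM : ∀ x, |φ x| ≤ M)
    {η : Measure (Cfg d A)} (hη : η ∈ MM φ) {N K : ℕ} (hNK : N ≤ K) (x x' : Cfg d A) :
    η.real (boxCylinder N x) * (boxSum φ N x' - boxSum φ N x
        - 2 * ∑ n ∈ box d K, varPot φ (boundaryDist N (supNorm n)))
      ≤ (2 * (K : ℝ) + 1) ^ d * varPot φ (K - N) := by
  obtain ⟨hprob, hinv, hmax⟩ := hη
  set g := boxSum φ N x' - boxSum φ N x
    - 2 * ∑ n ∈ box d K, varPot φ (boundaryDist N (supNorm n))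
  set e := (2 * (K : ℝ) + 1) ^ d * varPot φ (K - N)
  have he : 0 ≤ e := mul_nonneg (by positivity) (varPot_nonneg φ _)
  have hpointwise : ∀ y, (boxCylinder N x).indicator (fun _ => g) y - e
      ≤ boxSum φ K (replaceBlocks N K x x' y) - boxSum φ K y := by
    intro y
    by_cases hy : y ∈ boxCylinder N x
    · rw [Set.indicator_of_mem hy]
      linarith [boxSum_replaceBlocks_of_mem hM hNK (x' := x') hy]
    · rw [Set.indicator_of_notMem hy, zero_sub]
      exact boxSum_replaceBlocks_of_notMem hM hNK x' hy
  have hR := measurable_replaceBlocks N K x x'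
  have hind : Integrable ((boxCylinder N x).indicator fun _ => g) η :=
    (integrable_const g).indicator (measurableSet_boxCylinder N x)
  have hsum : Integrable (boxSum φ K) η := integrable_boxSum hφ hM K
  have := Measure.isProbabilityMeasure_map (μ := η) hR.aemeasurable
  have hsumR : Integrable (fun y => boxSum φ K (replaceBlocks N K x x' y)) η :=
    (integrable_boxSum hφ hM K).comp_measurable hR
  have hmono := integral_mono (hind.sub (integrable_const e)) (hsumR.sub hsum) hpointwise
  simp only [Pi.sub_apply] at hmono
  rw [integral_sub hind (integrable_const e), integral_sub hsumR hsum,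
    integral_indicator_const g (measurableSet_boxCylinder N x), integral_const, probReal_univ,
    one_smul, smul_eq_mul, integral_boxSum hinv hφ hM, hmax] at hmono
  linarith [integral_boxSum_replaceBlocks_le hφ hM hinv N K x x']

lemma measure_boxCylinder_eq_zero (hd : 1 ≤ d) (hφ : Measurable φ) (hM : ∀ x, |φ x| ≤ M)
    (hs : Summable fun j : ℕ => ((j : ℝ) + 1) ^ (d - 1) * varPot φ j) {N : ℕ} {x x' : Cfg d A}
    {c : ℝ} (hc : ∀ K, 2 * ∑ n ∈ box d K, varPot φ (boundaryDist N (supNorm n)) ≤ c)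
    (hgain : c < boxSum φ N x' - boxSum φ N x) {η : Measure (Cfg d A)} (hη : η ∈ MM φ) :
    η (boxCylinder N x) = 0 := by
  have := hη.1
  by_contra hne
  have hpos : 0 < η.real (boxCylinder N x) := ENNReal.toReal_pos hne (measure_ne_top _ _)
  obtain ⟨j, hj⟩ := exists_pow_mul_lt_of_summable hd (varPot_nonneg φ) hs N
    (mul_pos hpos (sub_pos.2 hgain))
  have hle := measureReal_boxCylinder_mul_le hφ hM hη (Nat.le_add_right N j) x x'
  rw [Nat.add_sub_cancel_left] at hle
  have hgap : boxSum φ N x' - boxSum φ N x - c ≤ boxSum φ N x' - boxSum φ N x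
      - 2 * ∑ n ∈ box d (N + j), varPot φ (boundaryDist N (supNorm n)) :=
    sub_le_sub_left (hc _) _
  exact absurd (hle.trans_lt hj) (not_lt.2 (mul_le_mul_of_nonneg_left hgap hpos.le))

end Cylinders

end InvariantMeasures

theorem statement10_general {d : ℕ} (hd : 1 ≤ d) {A : Type} [MeasurableSpace A]
    [MeasurableSingletonClass A] {φ : Cfg d A → ℝ} (hφ : Measurable φ)
    (hbdd : ∃ M, ∀ x, |φ x| ≤ M)
    (hsum : Summable fun n : ℕ => ((n + 1 : ℕ) : ℝ) ^ (d - 1) * varPot φ (n + 1))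
    (hneq : ∃ μ ν : Measure (Cfg d A), IsProbabilityMeasure μ ∧ Invariant μ ∧
      IsProbabilityMeasure ν ∧ Invariant ν ∧ (∫ x, φ x ∂μ) ≠ ∫ x, φ x ∂ν) :
    ∃ n : ℕ, 1 ≤ n ∧ ∃ W : (Fin d → Fin n) → A, ∀ η ∈ MM φ, η (cylE n W) = 0 := by
  obtain ⟨M, hM⟩ := hbdd
  obtain ⟨μ, ν, hμ, hμi, hν, hνi, hne⟩ := hneq
  wlog hlt : ∫ x, φ x ∂ν < ∫ x, φ x ∂μ generalizing μ ν
  · exact this ν μ hν hνi hμ hμi hne.symm (hne.lt_of_le (not_lt.1 hlt))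
  have hs := summable_pow_mul_of_summable_succ d (varPot_nonneg φ) hsum
  obtain ⟨C, hC⟩ := exists_sum_box_boundaryDist_le hd (varPot_nonneg φ) hs
  obtain ⟨N, hN⟩ := exists_mul_pow_pred_lt_pow_mul hd (2 * C) (sub_pos.2 hlt)
  obtain ⟨x, x', hgap⟩ := exists_mul_sub_le_boxSum_sub hφ hM hμi hνi N
  refine ⟨2 * N + 1, by omega, boxPattern N x, fun η hη => ?_⟩
  rw [hη.2.1.measure_cylE_boxPattern]
  refine measure_boxCylinder_eq_zero hd hφ hM hs (fun K => ?_) (hN.trans_le hgap) hη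
  linarith [hC N K]

/-- **Proposition 4.2.** If `Σ_{n ≥ 1} n^{d-1} var_n φ < ∞` and `∫ φ` is not
constant over shift-invariant probability measures, then some cylinder set is null for every
maximizing measure of `φ`. -/
theorem statement10 (d : ℕ) (hd : 1 ≤ d) (A : Type) [Fintype A] [TopologicalSpace A]
    [DiscreteTopology A] [MeasurableSpace A] [BorelSpace A]
    (φ : Cfg d A → ℝ) (hφ : Continuous φ)
    (hsum : Summable fun n : ℕ => ((n + 1 : ℕ) : ℝ) ^ (d - 1) * varPot φ (n + 1))
    (hneq : ∃ μ ν : Measure (Cfg d A), IsProbabilityMeasure μ ∧ Invariant μ ∧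
      IsProbabilityMeasure ν ∧ Invariant ν ∧ (∫ x, φ x ∂μ) ≠ ∫ x, φ x ∂ν) :
    ∃ n : ℕ, 1 ≤ n ∧ ∃ W : (Fin d → Fin n) → A, ∀ η ∈ MM φ, η (cylE n W) = 0 := by
  obtain ⟨M, hM⟩ := isCompact_univ.exists_bound_of_continuousOn hφ.continuousOn
  exact statement10_general hd hφ.measurable ⟨M, fun x => hM x trivial⟩ hsum hneq

end Freezing
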